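/- Let A be a finite set and B an arbitrary set, and assume that f : A^n → B depends on all of its n variables and n > max(|A|, 3). If f is determined by oddsupp then gap f = 2; otherwise gap f = 1. -/

import Mathlib

open Finset

section Defs

variable {A B : Type*}

/-- The `i`-th variable is essential in `f`. -/
def essentialAt {n : ℕ} (f : (Fin n → A) → B) (i : Fin n) : Prop :=
  ∃ x x' : Fin n → A, (∀ k, k ≠ i → x k = x' k) ∧ f x ≠ f x'

/-- The essential arity of `f`: the number of its essential variables. -/
noncomputable def essArity {n : ℕ} (f : (Fin n → A) → B) : ℕ :=
  Nat.card {i : Fin n // essentialAt f i}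

/-- The identification minor `f_{i ← j}`. -/
def idMinor {n : ℕ} (f : (Fin n → A) → B) (i j : Fin n) : (Fin n → A) → B :=
  fun x => f (Function.update x i (x j))

/-- The arity gap of `f`. -/
noncomputable def arityGap {n : ℕ} (f : (Fin n → A) → B) : ℕ :=
  sInf {d : ℕ | ∃ i j : Fin n, i ≠ j ∧ essentialAt f i ∧ essentialAt f j ∧
    d = essArity f - essArity (idMinor f i j)}

/-- `oddsupp x` is the set of elements occurring an odd number of times in `x`. -/
def oddsupp {n : ℕ} [DecidableEq A] (x : Fin n → A) : Finset A :=
  (Finset.univ.image x).filter fun a => Odd ((Finset.univ.filter fun j => x j = a).card)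

/-- `f` is determined by `oddsupp`. -/
def DeterminedByOddsupp {n : ℕ} [DecidableEq A] (f : (Fin n → A) → B) : Prop :=
  ∃ φ : Finset A → B, ∀ x, f x = φ (oddsupp x)

/-- `oddsuppOn I x = oddsupp (x|_I)`. -/
def oddsuppOn {n : ℕ} [DecidableEq A] (I : Finset (Fin n)) (x : Fin n → A) : Finset A :=
  (I.image x).filter fun a => Odd ((I.filter fun j => x j = a).card)

/-- `f` is `k`-decomposable: a sum of functions with at most `k` essential variables. -/
def KDecomposable {n : ℕ} [AddCommMonoid B] (k : ℕ) (f : (Fin n → A) → B) : Prop :=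
  ∃ (s : ℕ) (g : Fin s → (Fin n → A) → B),
    (∀ i, essArity (g i) ≤ k) ∧ ∀ x, f x = ∑ i, g i x

/-- Partial derivative of `f` with respect to its `i`-th variable with parameter `a`. -/
def pDeriv {n : ℕ} [AddCommGroup B] (f : (Fin n → A) → B) (i : Fin n) (a : A) :
    (Fin n → A) → B :=
  fun x => f (Function.update x i a) - f x

/-- Higher-order partial derivative `Δ_I^a f`. -/
def pDerivFin {n : ℕ} [AddCommGroup B] (f : (Fin n → A) → B) (I : Finset (Fin n))
    (a : Fin n → A) : (Fin n → A) → B :=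
  (I.sort (· ≤ ·)).foldr (fun i g => pDeriv g i (a i)) f

/-- `updateOn x J a` is the tuple `x_J^a`. -/
def updateOn {n : ℕ} (x : Fin n → A) (J : Finset (Fin n)) (a : Fin n → A) : Fin n → A :=
  fun k => if k ∈ J then a k else x k

/-- `g` is a simple minor of `f`. -/
def IsSimpleMinor {n m : ℕ} (g : (Fin m → A) → B) (f : (Fin n → A) → B) : Prop :=
  ∃ σ : Fin n → Fin m, ∀ x : Fin m → A, g x = f (x ∘ σ)

/-- `f` and `g` are equivalent: each is a simple minor of the other. -/
def FnEquiv {n m : ℕ} (f : (Fin n → A) → B) (g : (Fin m → A) → B) : Prop :=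
  IsSimpleMinor g f ∧ IsSimpleMinor f g

end Defs

/-!
The minor `f_{p ← q}` agrees with `f` on the diagonal `x p = x q`, and as `n > |A|` every tuple lies
on such a diagonal. Suppose that every minor has at most `n - 2` essential variables, and let
`f_{i ← j}` be one with the largest essential arity. If it did not depend on some `k ∉ {i, j}`, then
for a fourth variable `l` the function `F = f_{k ← l}` would agree with `f` on the diagonals
`x i = x j` and `x k = x l` of two disjoint pairs while missing a variable of each. By maximality
this agreement spreads to all diagonals, so `f = F` misses `k`, which is absurd. Hence `f_{i ← j}`
depends on exactly the variables other than `i` and `j`; maximality then passes from pair to pair,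
and every minor forgets both identified variables.

This means that two equal entries of `x` may be replaced by any other two equal entries without
changing `f x`. With the pigeonhole principle such moves yield all transpositions, so `f` is
symmetric, and entries can be cancelled in pairs until only `oddsupp x` matters. Conversely, if `f`
has this invariance, then its minors miss both identified variables, and a nonconstant minor, being
symmetric in the other variables, depends on all of them.
-/

theorem card_compl_pair_add_two {α : Type*} [Fintype α] [DecidableEq α] {a b : α} (hab : a ≠ b) :
    #({a, b}ᶜ : Finset α) + 2 = Fintype.card α := by
  rw [← card_pair hab, add_comm, card_add_card_compl]

theorem hammingDist_lt_hammingDist {ι : Type*} {β : ι → Type*} [Fintype ι]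
    [∀ i, DecidableEq (β i)] {x x' y : ∀ i, β i} {p : ι} (hp : x p ≠ y p) (hp' : x' p = y p)
    (h : ∀ k, x k = y k → x' k = y k) : hammingDist x' y < hammingDist x y := by
  refine card_lt_card (ssubset_iff_of_subset ?_ |>.2 ⟨p, by simpa using hp, by simpa using hp'⟩)
  exact monotone_filter_right _ fun k _ => mt (h k)

section EssentialVariables

open Function

variable {A B : Type*} {n : ℕ} {f : (Fin n → A) → B} {i : Fin n}

theorem not_essentialAt_iff :
    ¬ essentialAt f i ↔ ∀ (x : Fin n → A) (a : A), f (update x i a) = f x := by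
  refine ⟨fun h x a => ?_, ?_⟩
  · by_contra hne
    exact h ⟨update x i a, x, fun k hk => update_of_ne hk a x, hne⟩
  · rintro h ⟨x, y, hxy, hne⟩
    exact hne (by rw [← h x (y i), update_eq_iff.2 ⟨rfl, hxy⟩])

theorem apply_eq_of_forall_not_essentialAt (h : ∀ i, ¬ essentialAt f i) (x y : Fin n → A) :
    f x = f y := by
  suffices ∀ s : Finset (Fin n), f (s.piecewise y x) = f x by
    simpa using (this univ).symm
  intro s
  induction s using Finset.induction_on with
  | empty => simp
  | insert i s _ ih => rw [piecewise_insert, not_essentialAt_iff.1 (h i), ih]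

theorem essentialAt_perm_apply (σ : Equiv.Perm (Fin n)) (hσ : ∀ x, f (x ∘ σ) = f x)
    (h : essentialAt f i) : essentialAt f (σ i) := by
  obtain ⟨x, y, hxy, hne⟩ := h
  refine ⟨x ∘ σ.symm, y ∘ σ.symm, fun k hk => hxy _ ?_, ?_⟩
  · rwa [Ne, Equiv.symm_apply_eq]
  · rw [← hσ, ← hσ (y ∘ σ.symm)]
    simpa [comp_assoc] using hne

open Classical in
/-- The set of essential variables of `f`; its cardinality is `essArity f`. -/
noncomputable def essVars (f : (Fin n → A) → B) : Finset (Fin n) :=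
  {i | essentialAt f i}

theorem mem_essVars : i ∈ essVars f ↔ essentialAt f i := by
  simp [essVars]

theorem card_essVars (f : (Fin n → A) → B) : #(essVars f) = essArity f := by
  classical
  rw [essArity, Nat.card_eq_fintype_card, Fintype.card_subtype, essVars]

theorem essArity_eq_of_forall_essentialAt (hf : ∀ i, essentialAt f i) : essArity f = n := by
  rw [← card_essVars, eq_univ_of_forall fun i => mem_essVars.2 (hf i), card_fin]

theorem exists_not_essentialAt_of_essArity_add_two_le (h : essArity f + 2 ≤ n) (p : Fin n) :
    ∃ w, w ≠ p ∧ ¬ essentialAt f w := by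
  obtain ⟨w, hwp, hw⟩ : ∃ w ∈ univ.erase p, w ∉ essVars f := by
    refine exists_mem_notMem_of_card_lt_card ?_
    rw [card_essVars, card_erase_of_mem (mem_univ p), card_fin]
    omega
  exact ⟨w, ne_of_mem_erase hwp, fun h => hw (mem_essVars.2 h)⟩

end EssentialVariables

section Minors

open Function

variable {A B : Type*} {n : ℕ} {f : (Fin n → A) → B} {i j k : Fin n}

theorem idMinor_apply_of_eq (f : (Fin n → A) → B) {x : Fin n → A} (h : x i = x j) :
    idMinor f i j x = f x := by
  rw [idMinor, ← h, update_eq_self]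

theorem idMinor_eq_of_not_essentialAt (h : ¬ essentialAt f i) (j : Fin n) : idMinor f i j = f :=
  funext fun x => not_essentialAt_iff.1 h x (x j)

theorem not_essentialAt_idMinor_left (f : (Fin n → A) → B) (hij : i ≠ j) :
    ¬ essentialAt (idMinor f i j) i :=
  not_essentialAt_iff.2 fun x a => by simp [idMinor, hij.symm]

theorem not_essentialAt_idMinor (h : ¬ essentialAt f k) (hkj : k ≠ j) :
    ¬ essentialAt (idMinor f i j) k := by
  rcases eq_or_ne k i with rfl | hki
  · exact not_essentialAt_idMinor_left f hkj
  · refine not_essentialAt_iff.2 fun x a => ?_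
    rw [idMinor, idMinor, update_of_ne hkj.symm, update_comm hki, not_essentialAt_iff.1 h]

theorem essVars_idMinor_subset (f : (Fin n → A) → B) (hij : i ≠ j) :
    essVars (idMinor f i j) ⊆ insert j ((essVars f).erase i) := by
  intro k hk
  rw [mem_essVars] at hk
  rw [mem_insert, mem_erase, mem_essVars]
  refine or_iff_not_imp_left.2 fun hkj => ⟨?_, ?_⟩
  · rintro rfl
    exact not_essentialAt_idMinor_left f hij hk
  · by_contra h
    exact not_essentialAt_idMinor h hkj hk

theorem essArity_idMinor_lt (hij : i ≠ j) (hi : essentialAt f i) (hj : essentialAt f j) :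
    essArity (idMinor f i j) < essArity f := by
  have hsub := card_le_card (essVars_idMinor_subset f hij)
  rw [insert_eq_of_mem (mem_erase.2 ⟨hij.symm, mem_essVars.2 hj⟩)] at hsub
  rw [← card_essVars, ← card_essVars]
  exact hsub.trans_lt (card_erase_lt_of_mem (mem_essVars.2 hi))

theorem essArity_idMinor_le (f : (Fin n → A) → B) (i j : Fin n) :
    essArity (idMinor f i j) ≤ essArity f := by
  by_cases hi : essentialAt f i
  · rcases eq_or_ne i j with rfl | hij
    · rw [show idMinor f i i = f from funext fun x => idMinor_apply_of_eq f rfl]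
    · rw [← card_essVars, ← card_essVars]
      calc #(essVars (idMinor f i j)) ≤ #(insert j ((essVars f).erase i)) :=
            card_le_card (essVars_idMinor_subset f hij)
        _ ≤ #((essVars f).erase i) + 1 := card_insert_le _ _
        _ = #(essVars f) := card_erase_add_one (mem_essVars.2 hi)
  · rw [idMinor_eq_of_not_essentialAt hi]

theorem exists_essentialAt_idMinor [Fintype A] (hn : Fintype.card A < n) (hf : essentialAt f i) :
    ∃ p q k, p ≠ q ∧ essentialAt (idMinor f p q) k := by
  by_contra! hconst
  obtain ⟨x, y, -, hne⟩ := hf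
  have heq_const (w : Fin n → A) : f w = f fun _ => x i := by
    obtain ⟨p, q, hpq, hw⟩ := Fintype.exists_ne_map_eq_of_card_lt w (by rwa [Fintype.card_fin])
    calc f w = idMinor f p q w := (idMinor_apply_of_eq f hw).symm
      _ = idMinor f p q fun _ => x i :=
        apply_eq_of_forall_not_essentialAt (hconst p q · hpq) _ _
      _ = f fun _ => x i := idMinor_apply_of_eq f rfl
  exact hne ((heq_const x).trans (heq_const y).symm)

end Minors

section ArityGap

variable {A B : Type*} {n d : ℕ} {f : (Fin n → A) → B} {i j : Fin n}

theorem arityGap_eq_of_essArity_idMinor (hf : ∀ i, essentialAt f i)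
    (hle : ∀ i j, i ≠ j → essArity (idMinor f i j) + d ≤ n)
    (hij : i ≠ j) (heq : essArity (idMinor f i j) + d = n) : arityGap f = d := by
  refine IsLeast.csInf_eq ⟨⟨i, j, hij, hf i, hf j, ?_⟩, ?_⟩
  · rw [essArity_eq_of_forall_essentialAt hf]
    omega
  · rintro _ ⟨p, q, hpq, -, -, rfl⟩
    rw [essArity_eq_of_forall_essentialAt hf]
    have := hle p q hpq
    omega

theorem arityGap_eq_one_of_not_forall_essArity_le (hf : ∀ i, essentialAt f i)
    (h : ¬ ∀ p q, p ≠ q → essArity (idMinor f p q) + 2 ≤ n) : arityGap f = 1 := by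
  have hle (p q : Fin n) (hpq : p ≠ q) : essArity (idMinor f p q) + 1 ≤ n :=
    (essArity_idMinor_lt hpq (hf p) (hf q)).trans_eq (essArity_eq_of_forall_essentialAt hf)
  push Not at h
  obtain ⟨p, q, hpq, hlt⟩ := h
  exact arityGap_eq_of_essArity_idMinor hf hle hpq ((hle p q hpq).antisymm (Nat.lt_succ_iff.1 hlt))

end ArityGap

section Diagonals

open Function

variable {A B : Type*} {n : ℕ} {f F : (Fin n → A) → B} {i j k l p q r s t u v w : Fin n}

/-- `EqOnDiag p q f g` says that `f` and `g` agree on the diagonal `{x | x p = x q}`, on which the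
minor `idMinor f p q` agrees with `f`. -/
def EqOnDiag (p q : Fin n) (f g : (Fin n → A) → B) : Prop :=
  ∀ x : Fin n → A, x p = x q → f x = g x

theorem EqOnDiag.swap (h : EqOnDiag p q f F) : EqOnDiag q p f F :=
  fun x hx => h x hx.symm

theorem eqOnDiag_iff : EqOnDiag p q f F ↔ idMinor f p q = idMinor F p q := by
  refine ⟨fun h => funext fun x => h _ (by simp [update_apply]), fun h x hx => ?_⟩
  rw [← idMinor_apply_of_eq f hx, h, idMinor_apply_of_eq F hx]

theorem eqOnDiag_idMinor (f : (Fin n → A) → B) (p q : Fin n) : EqOnDiag p q f (idMinor f p q) :=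
  fun _ hx => (idMinor_apply_of_eq f hx).symm

theorem EqOnDiag.idMinor_eq (h : EqOnDiag p q f F) (hp : ¬ essentialAt F p) :
    idMinor f p q = F :=
  (eqOnDiag_iff.1 h).trans (idMinor_eq_of_not_essentialAt hp q)

theorem EqOnDiag.idMinor_of_ne (h : EqOnDiag u v f F) (hu : u ≠ p) (hv : v ≠ p) (q : Fin n) :
    EqOnDiag u v (idMinor f p q) (idMinor F p q) :=
  fun x hx => h _ (by rwa [update_of_ne hu, update_of_ne hv])

theorem EqOnDiag.idMinor_left (h : EqOnDiag p v f F) (hp : ¬ essentialAt F p) (hv : v ≠ p)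
    (q : Fin n) : EqOnDiag q v (idMinor f p q) F := by
  intro x hx
  rw [← not_essentialAt_iff.1 hp x (x q)]
  exact h _ (by rwa [update_self, update_of_ne hv])

theorem EqOnDiag.eq_of_not_essentialAt (h : EqOnDiag p q f F) (hf : ¬ essentialAt f p)
    (hF : ¬ essentialAt F p) : f = F :=
  (idMinor_eq_of_not_essentialAt hf q).symm.trans (h.idMinor_eq hF)

theorem EqOnDiag.not_essentialAt_right (h : EqOnDiag p q f F) (hpq : p ≠ q)
    (hF : ¬ essentialAt F p) (hf : ¬ essentialAt f q) (hrp : r ≠ p) (hrq : r ≠ q)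
    (hr : EqOnDiag p r f F ∨ EqOnDiag q r f F) : ¬ essentialAt F q := by
  rw [not_essentialAt_iff] at hF hf ⊢
  intro x a
  rcases hr with hpr | hqr
  · calc F (update x q a) = F (update (update x q a) p (x r)) := (hF _ _).symm
      _ = f (update (update x q a) p (x r)) := (hpr _ (by simp [hrp, hrq])).symm
      _ = f (update x p (x r)) := by rw [update_comm hpq.symm, hf]
      _ = F (update x p (x r)) := hpr _ (by simp [hrp])
      _ = F x := hF _ _
  · have hmerge (y : Fin n → A) : F y = F (update y q (y r)) :=
      calc F y = F (update y p (y q)) := (hF _ _).symm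
        _ = f (update y p (y q)) := (h _ (by simp [hpq.symm])).symm
        _ = f (update (update y p (y q)) q (y r)) := (hf _ _).symm
        _ = F (update (update y p (y q)) q (y r)) := hqr _ (by simp [hrp, hrq])
        _ = F (update y q (y r)) := by rw [update_comm hpq, hF]
    rw [hmerge, hmerge x, update_of_ne hrq, update_idem]

theorem EqOnDiag.eq_of_essArity_le (h : EqOnDiag p q f F) (hpq : p ≠ q) (hF : ¬ essentialAt F p)
    (hle : essArity f ≤ essArity F) (hrp : r ≠ p) (hrq : r ≠ q)
    (hr : EqOnDiag p r f F ∨ EqOnDiag q r f F) : f = F := by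
  by_cases hfp : essentialAt f p
  · have hfq : ¬ essentialAt f q := fun hfq =>
      (h.idMinor_eq hF ▸ essArity_idMinor_lt hpq hfp hfq).not_ge hle
    exact h.swap.eq_of_not_essentialAt hfq (h.not_essentialAt_right hpq hF hfq hrp hrq hr)
  · exact h.eq_of_not_essentialAt hfp hF

theorem EqOnDiag.of_two_diagonals (hps : EqOnDiag p s f F) (hpr : EqOnDiag p r f F)
    (hsp : s ≠ p) (hrp : r ≠ p) (hrs : r ≠ s) (hp : ¬ essentialAt F p) (hs : ¬ essentialAt F s)
    (hle : essArity (idMinor f p q) ≤ essArity F) : EqOnDiag p q f F := by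
  rcases eq_or_ne q s with rfl | hqs
  · exact hps
  rcases eq_or_ne q r with rfl | hqr
  · exact hpr
  have hminor : idMinor f p q = F :=
    (hps.idMinor_left hp hsp q).swap.eq_of_essArity_le hqs.symm hs hle hrs hqr.symm
      (.inr (hpr.idMinor_left hp hrp q))
  exact hminor ▸ eqOnDiag_idMinor f p q

theorem EqOnDiag.eq_of_adjacent (hst : EqOnDiag s t f F) (htw : EqOnDiag t w f F)
    (hst_ne : s ≠ t) (htw_ne : t ≠ w) (hs : ¬ essentialAt F s) (hw : ¬ essentialAt f w) :
    f = F := by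
  rw [not_essentialAt_iff] at hs hw
  funext x
  have hF : F (update (update x s (x t)) w (x t)) = F (update x w (x t)) := by
    rcases eq_or_ne s w with rfl | hsw
    · rw [update_idem]
    · rw [update_comm hsw, hs]
  calc f x = f (update x w (x t)) := (hw x _).symm
    _ = F (update x w (x t)) := htw _ (by simp [htw_ne])
    _ = F (update (update x s (x t)) w (x t)) := hF.symm
    _ = f (update (update x s (x t)) w (x t)) := (htw _ (by simp [htw_ne, hst_ne.symm])).symm
    _ = f (update x s (x t)) := hw _ _
    _ = F (update x s (x t)) := hst _ (by simp [hst_ne.symm])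
    _ = F x := hs _ _

theorem eqOnDiag_of_forall_eqOnDiag (hik : i ≠ k) (hi : ¬ essentialAt F i) (hk : ¬ essentialAt F k)
    (hDi : ∀ q, q ≠ i → EqOnDiag i q f F) (hDk : ∀ q, q ≠ k → EqOnDiag k q f F)
    (hpq : p ≠ q) (hlow : essArity (idMinor f p q) + 2 ≤ n) : EqOnDiag p q f F := by
  rcases eq_or_ne p i with rfl | hpi
  · exact hDi q hpq.symm
  rcases eq_or_ne p k with rfl | hpk
  · exact hDk q hpq.symm
  rcases eq_or_ne q i with rfl | hqi
  · exact (hDi p hpq).swap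
  rcases eq_or_ne q k with rfl | hqk
  · exact (hDk p hpq).swap
  obtain ⟨w, hwp, hw⟩ := exists_not_essentialAt_of_essArity_add_two_le hlow p
  rw [eqOnDiag_iff]
  rcases eq_or_ne k w with rfl | hkw
  · exact ((hDk i hik).idMinor_of_ne hpk.symm hpi.symm q).eq_of_adjacent
      ((hDi k hik.symm).idMinor_of_ne hpi.symm hwp q) hik.symm hik
      (not_essentialAt_idMinor hk hqk.symm) hw
  · exact ((hDi k hik.symm).idMinor_of_ne hpi.symm hpk.symm q).eq_of_adjacent
      ((hDk w hkw.symm).idMinor_of_ne hpk.symm hwp q) hik hkw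
      (not_essentialAt_idMinor hi hqi.symm) hw

theorem eq_of_two_disjoint_diagonals [Fintype A] (hn : Fintype.card A < n)
    (hlow : ∀ p q, p ≠ q → essArity (idMinor f p q) + 2 ≤ n)
    (hmax : ∀ p q, p ≠ q → essArity (idMinor f p q) ≤ essArity F)
    (hij : i ≠ j) (hik : i ≠ k) (hil : i ≠ l) (hjk : j ≠ k) (hjl : j ≠ l) (hkl : k ≠ l)
    (hi : ¬ essentialAt F i) (hk : ¬ essentialAt F k)
    (hDij : EqOnDiag i j f F) (hDkl : EqOnDiag k l f F) : f = F := by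
  have hDkl' : EqOnDiag k l (idMinor f i k) F :=
    idMinor_eq_of_not_essentialAt hi k ▸ hDkl.idMinor_of_ne hik.symm hil.symm k
  have hminor : idMinor f i k = F :=
    (hDij.idMinor_left hi hij.symm k).eq_of_essArity_le hjk.symm hk (hmax i k hik) hkl.symm
      hjl.symm (.inl hDkl')
  have hDik : EqOnDiag i k f F := hminor ▸ eqOnDiag_idMinor f i k
  have hDi (q : Fin n) (hq : q ≠ i) : EqOnDiag i q f F :=
    hDik.of_two_diagonals hDij hik.symm hij.symm hjk hi hk (hmax i q hq.symm)
  have hDk (q : Fin n) (hq : q ≠ k) : EqOnDiag k q f F :=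
    hDik.swap.of_two_diagonals hDkl hik hkl.symm hil.symm hk hi (hmax k q hq.symm)
  funext x
  obtain ⟨p, q, hpq, hx⟩ := Fintype.exists_ne_map_eq_of_card_lt x (by rwa [Fintype.card_fin])
  exact eqOnDiag_of_forall_eqOnDiag hik hi hk hDi hDk hpq (hlow p q hpq) x hx

end Diagonals

section MaximalMinors

open Function

variable {A B : Type*} {n : ℕ} {f : (Fin n → A) → B} {i j k p q : Fin n}

/-- `idMinor f i j` has the largest essential arity among the minors obtained from `f` by
identifying two distinct variables. -/
def IsMaximalMinor (f : (Fin n → A) → B) (i j : Fin n) : Prop :=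
  i ≠ j ∧ ∀ p q, p ≠ q → essArity (idMinor f p q) ≤ essArity (idMinor f i j)

theorem exists_isMaximalMinor (f : (Fin n → A) → B) (hn : 1 < n) :
    ∃ i j, IsMaximalMinor f i j := by
  have hne : (univ : Finset (Fin n)).offDiag.Nonempty :=
    ⟨(⟨0, by omega⟩, ⟨1, hn⟩), by simp⟩
  obtain ⟨⟨i, j⟩, hij, hmax⟩ := exists_max_image _ (fun e => essArity (idMinor f e.1 e.2)) hne
  exact ⟨i, j, by simpa using hij, fun p q hpq => hmax (p, q) (by simpa using hpq)⟩

theorem IsMaximalMinor.of_le (h : IsMaximalMinor f i j) (hpq : p ≠ q)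
    (hle : essArity (idMinor f i j) ≤ essArity (idMinor f p q)) : IsMaximalMinor f p q :=
  ⟨hpq, fun p' q' hpq' => (h.2 p' q' hpq').trans hle⟩

theorem IsMaximalMinor.essentialAt_idMinor [Fintype A] (h : IsMaximalMinor f i j)
    (hn : max (Fintype.card A) 3 < n) (hf : ∀ i, essentialAt f i)
    (hlow : ∀ p q, p ≠ q → essArity (idMinor f p q) + 2 ≤ n) (hki : k ≠ i) (hkj : k ≠ j) :
    essentialAt (idMinor f i j) k := by
  obtain ⟨hij, hmax⟩ := h
  obtain ⟨hcard, hn3⟩ := max_lt_iff.1 hn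
  by_contra hk
  obtain ⟨l, -, hl⟩ : ∃ l ∈ univ, l ∉ ({i, j, k} : Finset (Fin n)) :=
    exists_mem_notMem_of_card_lt_card (card_le_three.trans_lt (by rwa [card_fin]))
  obtain ⟨hli, hlj, hlk⟩ : l ≠ i ∧ l ≠ j ∧ l ≠ k := by simpa using hl
  have hminor : EqOnDiag i j (idMinor f k l) (idMinor f i j) :=
    idMinor_eq_of_not_essentialAt hk l ▸
      (eqOnDiag_idMinor f i j).idMinor_of_ne hki.symm hkj.symm l
  have hF : idMinor (idMinor f k l) i j = idMinor f i j :=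
    hminor.idMinor_eq (not_essentialAt_idMinor_left f hij)
  have hle : essArity (idMinor f i j) ≤ essArity (idMinor f k l) :=
    hF ▸ essArity_idMinor_le (idMinor f k l) i j
  have hDij : EqOnDiag i j f (idMinor f k l) := fun x hx =>
    (eqOnDiag_idMinor f i j x hx).trans (hminor x hx).symm
  have hDkl : EqOnDiag k l f (idMinor f k l) := eqOnDiag_idMinor f k l
  have hFk : ¬ essentialAt (idMinor f k l) k := not_essentialAt_idMinor_left f hlk.symm
  have hmaxF (p q : Fin n) (hpq : p ≠ q) : essArity (idMinor f p q) ≤ essArity (idMinor f k l) :=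
    (hmax p q hpq).trans hle
  have hF_eq : f = idMinor f k l := by
    by_cases hFi : essentialAt (idMinor f k l) i
    · have hFj : ¬ essentialAt (idMinor f k l) j := fun hFj =>
        (hF ▸ essArity_idMinor_lt hij hFi hFj).not_ge (hmax k l hlk.symm)
      exact eq_of_two_disjoint_diagonals hcard hlow hmaxF hij.symm hkj.symm hlj.symm hki.symm
        hli.symm hlk.symm hFj hFk hDij.swap hDkl
    · exact eq_of_two_disjoint_diagonals hcard hlow hmaxF hij hki.symm hli.symm hkj.symm
        hlj.symm hlk.symm hFi hFk hDij hDkl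
  exact hFk (hF_eq ▸ hf k)

theorem IsMaximalMinor.not_essentialAt_idMinor_right [Fintype A] (h : IsMaximalMinor f i j)
    (hn : max (Fintype.card A) 3 < n) (hf : ∀ i, essentialAt f i)
    (hlow : ∀ p q, p ≠ q → essArity (idMinor f p q) + 2 ≤ n) :
    ¬ essentialAt (idMinor f i j) j := by
  obtain ⟨w, hwi, hw⟩ := exists_not_essentialAt_of_essArity_add_two_le (hlow i j h.1) i
  obtain rfl : w = j := by
    by_contra hwj
    exact hw (h.essentialAt_idMinor hn hf hlow hwi hwj)
  exact hw

theorem IsMaximalMinor.swap (h : IsMaximalMinor f i j) (hj : ¬ essentialAt (idMinor f i j) j) :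
    IsMaximalMinor f j i :=
  h.of_le h.1.symm (by rw [(eqOnDiag_idMinor f i j).swap.idMinor_eq hj])

theorem IsMaximalMinor.replace_right (h : IsMaximalMinor f i j)
    (hj : ¬ essentialAt (idMinor f i j) j) (hik : i ≠ k) : IsMaximalMinor f i k := by
  have hminor : idMinor (idMinor f i k) j k = idMinor f i j :=
    ((eqOnDiag_idMinor f i j).idMinor_left (not_essentialAt_idMinor_left f h.1) h.1.symm
      k).swap.idMinor_eq hj
  exact h.of_le hik (hminor ▸ essArity_idMinor_le (idMinor f i k) j k)

theorem not_essentialAt_idMinor_right [Fintype A] (hn : max (Fintype.card A) 3 < n)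
    (hf : ∀ i, essentialAt f i)
    (hlow : ∀ p q, p ≠ q → essArity (idMinor f p q) + 2 ≤ n) (hpq : p ≠ q) :
    ¬ essentialAt (idMinor f p q) q := by
  have hright {i j : Fin n} (h : IsMaximalMinor f i j) : ¬ essentialAt (idMinor f i j) j :=
    h.not_essentialAt_idMinor_right hn hf hlow
  obtain ⟨i, j, hmax⟩ := exists_isMaximalMinor f (by omega)
  rcases eq_or_ne i p with rfl | hip
  · exact hright (hmax.replace_right (hright hmax) hpq)
  · have hip_max : IsMaximalMinor f i p := hmax.replace_right (hright hmax) hip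
    have hpi_max : IsMaximalMinor f p i := hip_max.swap (hright hip_max)
    exact hright (hpi_max.replace_right (hright hpi_max) hpq)

end MaximalMinors

section Oddsupp

open Function

variable {A : Type*} [DecidableEq A] {n : ℕ} {x y : Fin n → A} {a : A} {p q : Fin n}

theorem mem_oddsupp : a ∈ oddsupp x ↔ Odd #{j | x j = a} := by
  rw [oddsupp, mem_filter, and_iff_right_iff_imp]
  intro hodd
  obtain ⟨j, hj⟩ := card_pos.1 hodd.pos
  exact mem_image.2 ⟨j, mem_univ j, (mem_filter.1 hj).2⟩

theorem mem_oddsupp_iff_sum : a ∈ oddsupp x ↔ ∑ j, (if x j = a then 1 else 0 : ZMod 2) = 1 := by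
  rw [mem_oddsupp, ← ZMod.natCast_eq_one_iff_odd, sum_boole]

theorem oddsupp_comp_perm (x : Fin n → A) (σ : Equiv.Perm (Fin n)) :
    oddsupp (x ∘ σ) = oddsupp x := by
  ext a
  rw [mem_oddsupp_iff_sum, mem_oddsupp_iff_sum]
  exact Eq.congr_left (Equiv.sum_comp σ fun j => if x j = a then 1 else 0)

theorem mem_oddsupp_iff_sum_compl_pair (hpq : p ≠ q) (hx : x p = x q) :
    a ∈ oddsupp x ↔ ∑ j ∈ {p, q}ᶜ, (if x j = a then 1 else 0 : ZMod 2) = 1 := by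
  rw [mem_oddsupp_iff_sum, ← sum_compl_add_sum {p, q}, sum_pair hpq, hx,
    CharTwo.add_self_eq_zero, add_zero]

theorem oddsupp_update_update (hpq : p ≠ q) (hx : x p = x q) (a : A) :
    oddsupp (update (update x p a) q a) = oddsupp x := by
  ext b
  rw [mem_oddsupp_iff_sum_compl_pair hpq hx,
    mem_oddsupp_iff_sum_compl_pair hpq (by simp [hpq])]
  refine Eq.congr_left (sum_congr rfl fun j hj => ?_)
  simp only [mem_compl, mem_insert, mem_singleton, not_or] at hj
  rw [update_of_ne hj.2, update_of_ne hj.1]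

theorem exists_ne_of_oddsupp_eq (h : oddsupp x = oddsupp y) (hp : x p ≠ y p) :
    ∃ q, q ≠ p ∧ x q ≠ y q ∧ (y q = y p ∨ x q = y p) := by
  by_contra! hcon
  have hiff (q : Fin n) (hq : q ≠ p) : y q = y p ↔ x q = y p := by
    by_cases hxy : x q = y q
    · rw [hxy]
    · exact iff_of_false (hcon q hq hxy).1 (hcon q hq hxy).2
  have hinsert : univ.filter (y · = y p) = insert p (univ.filter (x · = y p)) := by
    ext j
    rcases eq_or_ne j p with rfl | hj
    · simp
    · simp [hj, hiff j hj]
  have hodd : Odd #{j | x j = y p} ↔ Odd #{j | y j = y p} := by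
    rw [← mem_oddsupp, ← mem_oddsupp, h]
  rw [hinsert, card_insert_of_notMem (by simpa using hp), Nat.odd_add_one] at hodd
  exact iff_not_self hodd

end Oddsupp

section PairInvariance

open Function Equiv

variable {A B : Type*} {n : ℕ} {f : (Fin n → A) → B} {x : Fin n → A} {p q r s : Fin n}

/-- `f` does not change when two equal entries of its argument are replaced by another pair of
equal entries. For `|A| < n` this is equivalent to being determined by `oddsupp`. -/
def PairInvariant (f : (Fin n → A) → B) : Prop :=
  ∀ (x : Fin n → A) (p q : Fin n) (a : A), p ≠ q → x p = x q →
    f (update (update x p a) q a) = f x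

theorem pairInvariant_iff :
    PairInvariant f ↔ ∀ p q, p ≠ q → ¬ essentialAt (idMinor f p q) q := by
  simp only [not_essentialAt_iff]
  refine ⟨fun h p q hpq x a => ?_, fun h x p q a hpq hx => ?_⟩
  · calc idMinor f p q (update x q a) = f (update (update (update x p (x q)) p a) q a) := by
          rw [idMinor, update_self, update_idem, update_comm hpq]
      _ = idMinor f p q x := h _ p q a hpq (by simp [hpq.symm])
  · calc f (update (update x p a) q a) = idMinor f p q (update x q a) := by
          rw [idMinor, update_self, update_comm hpq]
      _ = idMinor f p q x := h p q hpq x a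
      _ = f x := idMinor_apply_of_eq f hx

theorem PairInvariant.comp_swap_of_eq (hf : PairInvariant f) (hpq : p ≠ q) (hsp : s ≠ p)
    (hsq : s ≠ q) (hx : x p = x s) : f (x ∘ swap p q) = f x := by
  -- Move the pair `p, s` to the value `x q`, then the pair `q, s` to the value `x p`.
  set y := update (update x p (x q)) s (x q) with hy
  have hmoves : update (update y q (x p)) s (x p) = x ∘ swap p q := by
    rw [hy, update_comm hsq.symm, update_idem, update_comm hsp.symm, hx, update_eq_self,
      update_comm hpq, comp_swap_eq_update, hx]
  rw [← hmoves, hf y q s _ hsq.symm (by simp [hy, hpq.symm, hsq.symm]), hf x p s _ hsp.symm hx]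

theorem PairInvariant.comp_swap_of_eq_compl (hf : PairInvariant f) (hpq : p ≠ q) (hrs : r ≠ s)
    (hrp : r ≠ p) (hrq : r ≠ q) (hsp : s ≠ p) (hsq : s ≠ q) (hx : x r = x s) :
    f (x ∘ swap p q) = f x := by
  have hcomm (z : Fin n → A) (a : A) : update (update z r a) s a ∘ swap p q =
      update (update (z ∘ swap p q) r a) s a := by
    rw [update_comp_equiv, update_comp_equiv, symm_swap, swap_apply_of_ne_of_ne hsp hsq,
      swap_apply_of_ne_of_ne hrp hrq]
  have hx_swap : (x ∘ swap p q) r = (x ∘ swap p q) s := by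
    rw [comp_apply, comp_apply, swap_apply_of_ne_of_ne hrp hrq, swap_apply_of_ne_of_ne hsp hsq, hx]
  -- Lend `r, s` the value `x p`, so that the previous lemma applies, and undo this afterwards.
  calc f (x ∘ swap p q) = f (update (update (x ∘ swap p q) r (x p)) s (x p)) :=
        (hf _ r s _ hrs hx_swap).symm
    _ = f (update (update x r (x p)) s (x p) ∘ swap p q) := by rw [hcomm]
    _ = f (update (update x r (x p)) s (x p)) :=
        hf.comp_swap_of_eq hpq hsp hsq (by simp [hrp.symm, hsp.symm])
    _ = f x := hf x r s _ hrs hx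

theorem PairInvariant.comp_swap [Fintype A] (hf : PairInvariant f) (hn : Fintype.card A < n)
    (x : Fin n → A) (p q : Fin n) : f (x ∘ swap p q) = f x := by
  classical
  by_cases hx : x p = x q
  · rw [comp_swap_eq_update, hx, update_eq_self, ← hx, update_eq_self]
  have hpq : p ≠ q := fun h => hx (congrArg x h)
  by_cases hs : ∃ s, s ≠ p ∧ s ≠ q ∧ (x p = x s ∨ x q = x s)
  · obtain ⟨s, hsp, hsq, hs | hs⟩ := hs
    · exact hf.comp_swap_of_eq hpq hsp hsq hs
    · exact swap_comm q p ▸ hf.comp_swap_of_eq hpq.symm hsq hsp hs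
  · push Not at hs
    have hmaps (k : Fin n) (hk : k ∈ ({p, q}ᶜ : Finset (Fin n))) :
        x k ∈ ({x p, x q}ᶜ : Finset A) := by
      simp only [mem_compl, mem_insert, mem_singleton, not_or] at hk ⊢
      exact ⟨(hs k hk.1 hk.2).1.symm, (hs k hk.1 hk.2).2.symm⟩
    have hcard : #({x p, x q}ᶜ : Finset A) < #({p, q}ᶜ : Finset (Fin n)) := by
      rw [← Nat.add_lt_add_iff_right (k := 2), card_compl_pair_add_two hx,
        card_compl_pair_add_two hpq, Fintype.card_fin]
      exact hn
    obtain ⟨r, hr, s, hs, hrs, hx_eq⟩ := exists_ne_map_eq_of_card_lt_of_maps_to hcard hmaps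
    simp only [mem_compl, mem_insert, mem_singleton, not_or] at hr hs
    exact hf.comp_swap_of_eq_compl hpq hrs hr.1 hr.2 hs.1 hs.2 hx_eq

theorem PairInvariant.factorsThrough_oddsupp [Fintype A] [DecidableEq A] (hf : PairInvariant f)
    (hn : Fintype.card A < n) : f.FactorsThrough oddsupp := by
  intro x y hxy
  induction hd : hammingDist x y using Nat.strong_induction_on generalizing x y with
  | _ d ih =>
    subst hd
    by_cases hne : x = y
    · rw [hne]
    obtain ⟨p, hp⟩ := Function.ne_iff.1 hne
    obtain ⟨q, hqp, hq, hyq | hxq⟩ := exists_ne_of_oddsupp_eq hxy hp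
    · have hlt : hammingDist x (update (update y p (x p)) q (x p)) < hammingDist x y := by
        rw [hammingDist_comm, hammingDist_comm x y]
        refine hammingDist_lt_hammingDist hp.symm (by simp [hqp.symm]) fun k hk => ?_
        have hkp : k ≠ p := fun h => hp (h ▸ hk.symm)
        have hkq : k ≠ q := fun h => hq (h ▸ hk.symm)
        rw [update_of_ne hkq, update_of_ne hkp, hk]
      rw [ih _ hlt (hxy.trans (oddsupp_update_update hqp.symm hyq.symm _).symm) rfl,
        hf _ _ _ _ hqp.symm hyq.symm]
    · have hlt : hammingDist (x ∘ swap p q) y < hammingDist x y := by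
        refine hammingDist_lt_hammingDist hp (by simp [hxq]) fun k hk => ?_
        have hkp : k ≠ p := fun h => hp (h ▸ hk)
        have hkq : k ≠ q := fun h => hq (h ▸ hk)
        rw [comp_apply, swap_apply_of_ne_of_ne hkp hkq, hk]
      rw [← ih _ hlt ((oddsupp_comp_perm x _).trans hxy) rfl, hf.comp_swap hn]

theorem PairInvariant.determinedByOddsupp [Fintype A] [DecidableEq A] [Nonempty B]
    (hf : PairInvariant f) (hn : Fintype.card A < n) : DeterminedByOddsupp f := by
  obtain ⟨φ, hφ⟩ := (factorsThrough_iff f).1 (hf.factorsThrough_oddsupp hn)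
  exact ⟨φ, congrFun hφ⟩

theorem DeterminedByOddsupp.pairInvariant [DecidableEq A] (hf : DeterminedByOddsupp f) :
    PairInvariant f := by
  obtain ⟨φ, hφ⟩ := hf
  intro x p q a hpq hx
  rw [hφ, hφ, oddsupp_update_update hpq hx]

end PairInvariance

section GapTwo

open Function Equiv

variable {A B : Type*} {n : ℕ} {f : (Fin n → A) → B} {i j k : Fin n}

theorem PairInvariant.essVars_idMinor_subset (hf : PairInvariant f) (hij : i ≠ j) :
    essVars (idMinor f i j) ⊆ {i, j}ᶜ := by
  intro k hk
  rw [mem_essVars] at hk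
  simp only [mem_compl, mem_insert, mem_singleton, not_or]
  refine ⟨?_, ?_⟩ <;> rintro rfl
  · exact not_essentialAt_idMinor_left f hij hk
  · exact pairInvariant_iff.1 hf i k hij hk

theorem PairInvariant.essArity_idMinor_add_two_le (hf : PairInvariant f) (hij : i ≠ j) :
    essArity (idMinor f i j) + 2 ≤ n := by
  calc essArity (idMinor f i j) + 2 = #(essVars (idMinor f i j)) + 2 := by rw [card_essVars]
    _ ≤ #({i, j}ᶜ : Finset (Fin n)) + 2 :=
      Nat.add_le_add_right (card_le_card (hf.essVars_idMinor_subset hij)) 2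
    _ = n := by rw [card_compl_pair_add_two hij, Fintype.card_fin]

theorem idMinor_comp_perm {σ : Perm (Fin n)} (hσ : ∀ x, f (x ∘ σ) = f x) (hi : σ i = i)
    (hj : σ j = j) (x : Fin n → A) : idMinor f i j (x ∘ σ) = idMinor f i j x := by
  rw [idMinor, idMinor, ← hσ (update x i (x j)), update_comp_equiv, comp_apply, hj,
    (symm_apply_eq σ).2 hi.symm]

theorem PairInvariant.essVars_idMinor [Fintype A] (hf : PairInvariant f)
    (hn : Fintype.card A < n) (hij : i ≠ j) (hk : essentialAt (idMinor f i j) k) :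
    essVars (idMinor f i j) = {i, j}ᶜ := by
  refine (hf.essVars_idMinor_subset hij).antisymm fun l hl => ?_
  have hk' := hf.essVars_idMinor_subset hij (mem_essVars.2 hk)
  simp only [mem_compl, mem_insert, mem_singleton, not_or] at hk' hl
  have hsymm := idMinor_comp_perm (hf.comp_swap hn · k l)
    (swap_apply_of_ne_of_ne (Ne.symm hk'.1) (Ne.symm hl.1))
    (swap_apply_of_ne_of_ne (Ne.symm hk'.2) (Ne.symm hl.2))
  simpa [mem_essVars] using essentialAt_perm_apply (swap k l) hsymm hk

theorem PairInvariant.arityGap_eq_two [Fintype A] (hf : PairInvariant f)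
    (hn : Fintype.card A < n) (hess : ∀ i, essentialAt f i) : arityGap f = 2 := by
  obtain ⟨i, j, k, hij, hk⟩ := exists_essentialAt_idMinor hn (hess ⟨0, by omega⟩)
  refine arityGap_eq_of_essArity_idMinor hess (fun p q => hf.essArity_idMinor_add_two_le) hij ?_
  rw [← card_essVars, hf.essVars_idMinor hn hij hk, card_compl_pair_add_two hij, Fintype.card_fin]

end GapTwo

theorem willard_arity_gap {A B : Type*} [Fintype A] [DecidableEq A] {n : ℕ}
    (f : (Fin n → A) → B) (hdep : ∀ i, essentialAt f i)
    (hn : max (Fintype.card A) 3 < n) :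
    (DeterminedByOddsupp f → arityGap f = 2) ∧
    (¬ DeterminedByOddsupp f → arityGap f = 1) := by
  have hcard : Fintype.card A < n := (le_max_left _ _).trans_lt hn
  refine ⟨fun h => h.pairInvariant.arityGap_eq_two hcard hdep, fun h => ?_⟩
  refine arityGap_eq_one_of_not_forall_essArity_le hdep fun hlow => h ?_
  have hinv : PairInvariant f :=
    pairInvariant_iff.2 fun p q hpq => not_essentialAt_idMinor_right hn hdep hlow hpq
  obtain ⟨x, -⟩ := hdep ⟨0, by omega⟩
  have : Nonempty B := ⟨f x⟩
  exact hinv.determinedByOddsupp hcard
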